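/- Let q be a prime power, n ≥ 1, and d_1, ..., d_t positive integers with d := ∑ d_i ≤ n. Set r = ⌈(n - d)/max_i(d_i)⌉. Then for any homogeneous polynomials F_1, ..., F_t over F_q of degrees d_1, ..., d_t in n+1 variables, the number of points of the projective zero set Z(F_1,...,F_t) in P^n(F_q) is congruent to |P^{r-1}(F_q)| = 1 + q + ... + q^{r-1} modulo q^r, provided r ≥ 1. (Case t = 1, d_1 = 1: a hyperplane in P^n has exactly 1 + q + ... + q^{n-1} points.) -/

import Mathlib

open MvPolynomial

/-!
Let `ψ` be a nontrivial additive character of the field `k` with `q = p ^ f` elements. Summing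
`ψ (∑ i, y i * F i x)` over all `x` and `y` gives `q ^ t` times the number of affine zeros, so the
affine Ax–Katz theorem is a divisibility of this exponential sum.

As a function on `k`, `ψ` is a combination of powers `ω ^ m`, `0 ≤ m < q`, of the Teichmüller
character, whose coefficients are Gauss sums up to units. By Stickelberger the coefficient of
`ω ^ m` is divisible by `(ζ - 1) ^ s`, where `ζ` is a primitive `p`-th root of unity, `s` is the sum
of the base-`p` digits of `m`, and `(ζ - 1) ^ (p - 1)` is associated to `p`. After expanding
`ψ (∑ i, y i * F i x)` over the monomials of its argument, orthogonality kills all terms except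
those whose exponent vector is divisible by `q - 1`. This condition is invariant under rotating the
base-`p` digits of the multiplicities, and averaging over the rotations turns digit sums into
ordinary sums, which a degree count bounds below.

The affine zero set of a homogeneous system is a cone: it has `(q - 1) * N + 1` elements if the
projective one has `N`. Since `(q - 1) * (1 + q + ⋯ + q ^ (r - 1)) + 1 = q ^ r` and `q - 1` is prime
to `q`, divisibility of the affine count by `q ^ r` is the congruence for `N`.
-/

section Digits

variable {p : ℕ}

/-- The sum of the base-`p` digits of `b`, which is the exponent in Stickelberger's
divisibility. -/
def digitSum (p b : ℕ) : ℕ := (Nat.digits p b).sum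

@[simp]
theorem digitSum_zero (p : ℕ) : digitSum p 0 = 0 := by simp [digitSum]

theorem digitSum_eq_mod_add_digitSum_div (hp : 1 < p) (b : ℕ) :
    digitSum p b = b % p + digitSum p (b / p) := by
  rcases Nat.eq_zero_or_pos b with rfl | hb
  · simp
  · simp [digitSum, Nat.digits_def' hp hb]

theorem digitSum_base_mul (hp : 1 < p) (b : ℕ) : digitSum p (p * b) = digitSum p b := by
  rw [digitSum_eq_mod_add_digitSum_div hp, Nat.mul_mod_right,
    Nat.mul_div_cancel_left _ (by lia), zero_add]

theorem digitSum_add_one (hp : 1 < p) {b : ℕ} (h : ¬ p ∣ b + 1) :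
    digitSum p (b + 1) = digitSum p b + 1 := by
  have hmod : (b + 1) % p = b % p + 1 := by
    have hquot := Nat.succ_div_of_not_dvd h
    have := Nat.div_add_mod b p
    have := Nat.div_add_mod (b + 1) p
    rw [hquot] at this
    lia
  rw [digitSum_eq_mod_add_digitSum_div hp, digitSum_eq_mod_add_digitSum_div hp b,
    Nat.succ_div_of_not_dvd h, hmod]
  lia

theorem digitSum_complement_add_digitSum (hp : 1 < p) (f : ℕ) {b : ℕ} (hb : b < p ^ f) :
    digitSum p (p ^ f - 1 - b) + digitSum p b = f * (p - 1) := by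
  induction f generalizing b with
  | zero => simp [show b = 0 by simpa using hb]
  | succ f ih =>
    have hdiv : b / p < p ^ f := Nat.div_lt_of_lt_mul (by rwa [← pow_succ'])
    have hmod := Nat.mod_lt b (show 0 < p by lia)
    have hcompl : p ^ (f + 1) - 1 - b = (p - 1 - b % p) + p * (p ^ f - 1 - b / p) := by
      obtain ⟨c, hc⟩ := Nat.exists_eq_add_of_lt hdiv
      have := Nat.div_add_mod b p
      rw [show p ^ f - 1 - b / p = c by lia, pow_succ', hc, mul_add, mul_add]
      lia
    have hlast : p - 1 - b % p < p := by lia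
    rw [digitSum_eq_mod_add_digitSum_div hp, digitSum_eq_mod_add_digitSum_div hp b, hcompl,
      Nat.add_mul_mod_self_left, Nat.mod_eq_of_lt hlast, Nat.add_mul_div_left _ _ (by lia),
      Nat.div_eq_of_lt hlast, zero_add, add_mul]
    have := ih hdiv
    lia

theorem digitSum_add_sub_one_mul_sum_div_pow (hp : 1 < p) {f b : ℕ} (hb : b < p ^ f) :
    digitSum p b + (p - 1) * ∑ j ∈ Finset.range f, b / p ^ (j + 1) = b := by
  rcases eq_or_ne b 0 with rfl | hb0
  · simp
  have hlegendre := Nat.sub_one_mul_sum_log_div_pow_eq_sub_sum_digits (p := p) b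
  have htrunc : ∑ j ∈ Finset.range (Nat.log p b).succ, b / p ^ (j + 1) =
      ∑ j ∈ Finset.range f, b / p ^ (j + 1) := by
    refine Finset.sum_subset (Finset.range_mono (Nat.log_lt_of_lt_pow hb0 hb)) fun j _ hj => ?_
    exact Nat.div_eq_of_lt (Nat.lt_pow_of_log_lt hp (by have := Finset.mem_range.not.mp hj; lia))
  rw [← htrunc, hlegendre, digitSum, Nat.add_sub_cancel' (Nat.digit_sum_le p b)]

/-- The `i`-fold cyclic rotation of the `f`-digit base-`p` expansion of `m`: multiplying by `p ^ i`
shifts the expansion, and the digits that overflow `p ^ f` are brought back at the bottom. -/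
def digitRotate (p f i m : ℕ) : ℕ := p ^ i * m / p ^ f + p ^ i * m % p ^ f

theorem digitRotate_add_sub_one_mul (hp : 0 < p) (f i m : ℕ) :
    digitRotate p f i m + (p ^ f - 1) * (p ^ i * m / p ^ f) = p ^ i * m := by
  have hpos : 0 < p ^ f := by positivity
  have := Nat.div_add_mod (p ^ i * m) (p ^ f)
  rw [digitRotate, Nat.sub_one_mul]
  have := Nat.le_mul_of_pos_left (p ^ i * m / p ^ f) hpos
  lia

theorem digitRotate_eq_zero_iff (hp : 0 < p) {f i m : ℕ} : digitRotate p f i m = 0 ↔ m = 0 := by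
  refine ⟨fun h => ?_, by rintro rfl; simp [digitRotate]⟩
  have hspec := digitRotate_add_sub_one_mul hp f i m
  rw [h, (Nat.add_eq_zero_iff.mp h).1, mul_zero, zero_add] at hspec
  exact (mul_eq_zero.mp hspec.symm).resolve_left (by positivity)

theorem sub_one_mul_sum_digitRotate (hp : 1 < p) (f : ℕ) {m : ℕ} (hm : m < p ^ f) :
    (p - 1) * ∑ i ∈ Finset.range f, digitRotate p f i m = (p ^ f - 1) * digitSum p m := by
  have hquot : ∑ i ∈ Finset.range f, p ^ i * m / p ^ f =
      ∑ j ∈ Finset.range f, m / p ^ (j + 1) := by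
    rw [← Finset.sum_range_reflect]
    refine Finset.sum_congr rfl fun j hj => ?_
    have hsplit : p ^ f = p ^ (f - 1 - j) * p ^ (j + 1) := by
      rw [← pow_add]
      congr 1
      have := Finset.mem_range.mp hj
      lia
    rw [hsplit, Nat.mul_div_mul_left _ _ (by positivity)]
  have hgeom : (p - 1) * ∑ i ∈ Finset.range f, p ^ i = p ^ f - 1 := by
    rw [Nat.geomSum_eq hp, Nat.mul_div_cancel']
    simpa using Nat.sub_dvd_pow_sub_pow p 1 f
  have hsum : ∑ i ∈ Finset.range f, digitRotate p f i m +
      (p ^ f - 1) * ∑ j ∈ Finset.range f, m / p ^ (j + 1) = (∑ i ∈ Finset.range f, p ^ i) * m := by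
    rw [← hquot, Finset.mul_sum, ← Finset.sum_add_distrib, Finset.sum_mul]
    exact Finset.sum_congr rfl fun i _ => digitRotate_add_sub_one_mul (by lia) f i m
  refine Nat.add_right_cancel
    (m := (p ^ f - 1) * ((p - 1) * ∑ j ∈ Finset.range f, m / p ^ (j + 1))) ?_
  rw [← mul_add, digitSum_add_sub_one_mul_sum_div_pow hp hm]
  linear_combination (p - 1) * hsum + m * hgeom

end Digits

section GaussSum

variable {k A : Type*} [Field k] [Fintype k] [CommRing A]

theorem gaussSum_pow_char (p : ℕ) [Fact p.Prime] [CharP k p] (χ : MulChar k A) {ψ : AddChar k A}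
    (hψ : ∀ x, ψ (x ^ p) = ψ x) : gaussSum (χ ^ p) ψ = gaussSum χ ψ :=
  Fintype.sum_bijective (fun x : k => x ^ p) (frobeniusEquiv k p).bijective _ _ fun x => by
    rw [hψ, MulChar.pow_apply' _ (NeZero.ne p), map_pow]

theorem card_dvd_gaussSum_mul_gaussSum_inv [IsDomain A] {χ : MulChar k A} (hχ : χ ≠ 1)
    {ψ : AddChar k A} (hψ : ψ.IsPrimitive) :
    (Fintype.card k : A) ∣ gaussSum χ ψ * gaussSum χ⁻¹ ψ := by
  have hconj := mul_gaussSum_inv_eq_gaussSum χ⁻¹ ψ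
  rw [← gaussSum_mul_gaussSum_eq_card hχ hψ]
  exact mul_dvd_mul_left _ (Dvd.intro_left _ hconj)

/-- Build `b` up from `0` digit by digit: Frobenius shifts the digits for free, and each unit added
costs a Jacobi sum. -/
theorem gaussSum_pow_dvd_gaussSum_pow_digitSum [IsDomain A] (p : ℕ) [Fact p.Prime] [CharP k p]
    (χ : MulChar k A) {ψ : AddChar k A} (hψ : ∀ x, ψ (x ^ p) = ψ x) {b : ℕ} (hb0 : 0 < b)
    (hb : b < orderOf χ) : gaussSum (χ ^ b) ψ ∣ gaussSum χ ψ ^ digitSum p b := by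
  have hp : 1 < p := (Fact.out : p.Prime).one_lt
  induction b using Nat.strong_induction_on with
  | _ b ih =>
  by_cases hdvd : p ∣ b
  · obtain ⟨c, rfl⟩ := hdvd
    have hc0 : 0 < c := Nat.pos_of_mul_pos_left hb0
    have hc : c < p * c := lt_mul_of_one_lt_left hc0 hp
    rw [mul_comm p c, pow_mul, gaussSum_pow_char p _ hψ, mul_comm c p, digitSum_base_mul hp]
    exact ih c hc hc0 (hc.trans hb)
  · obtain ⟨c, rfl⟩ : ∃ c, b = c + 1 := ⟨b - 1, by lia⟩
    rw [digitSum_add_one hp hdvd]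
    rcases Nat.eq_zero_or_pos c with rfl | hc0
    · simp
    have hne : χ ^ c * χ ≠ 1 := pow_succ χ c ▸ pow_ne_one_of_lt_orderOf hb0.ne' hb
    rw [pow_succ, pow_succ]
    exact (Dvd.intro _ (jacobiSum_mul_nontrivial hne ψ)).trans
      (mul_dvd_mul_right (ih c (by lia) hc0 (by lia)) _)

variable {ω : MulChar k A}

theorem orderOf_eq_card_sub_one_of_injective (hω : Function.Injective ω) :
    orderOf ω = Fintype.card k - 1 := by
  refine Nat.dvd_antisymm (MulChar.orderOf_dvd_card_sub_one k ω) ?_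
  rw [← FiniteField.forall_pow_eq_one_iff]
  intro x
  have hx : ω (x ^ orderOf ω : k) = ω 1 := by
    rw [map_pow, ← MulChar.pow_apply_coe, pow_orderOf_eq_one, MulChar.one_apply_coe, map_one]
  exact Units.ext (hω hx)

variable [IsDomain A]

theorem sum_range_apply_pow_succ_eq_zero (hω : Function.Injective ω) {y : k} (hy : y ≠ 1) :
    ∑ m ∈ Finset.range (Fintype.card k - 1), ω y ^ (m + 1) = 0 := by
  rcases eq_or_ne y 0 with rfl | hy0
  · simp [MulChar.map_zero]
  have hgeom := mul_geom_sum (ω y) (Fintype.card k - 1)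
  rw [← map_pow, FiniteField.pow_card_sub_one_eq_one y hy0, map_one, sub_self] at hgeom
  have hne : ω y - 1 ≠ 0 := sub_ne_zero.mpr fun h => hy (hω (h.trans (map_one ω).symm))
  simp_rw [pow_succ', ← Finset.mul_sum, (mul_eq_zero.mp hgeom).resolve_left hne, mul_zero]

theorem sum_range_sum_inv_pow_mul_mul_pow (hω : Function.Injective ω) (h : k → A) (h0 : h 0 = 0)
    (u : k) :
    ∑ m ∈ Finset.range (Fintype.card k - 1), (∑ x, (ω⁻¹ ^ (m + 1)) x * h x) * ω u ^ (m + 1) =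
      ((Fintype.card k - 1 : ℕ) : A) * h u := by
  have hterm (x : k) (m : ℕ) : (ω⁻¹ ^ (m + 1)) x * h x * ω u ^ (m + 1) =
      h x * ω (x⁻¹ * u) ^ (m + 1) := by
    rw [MulChar.pow_apply' _ m.add_one_ne_zero, MulChar.inv_apply', map_mul, mul_pow]
    ring
  simp_rw [Finset.sum_mul, hterm]
  rw [Finset.sum_comm]
  simp_rw [← Finset.mul_sum]
  rw [Finset.sum_eq_single u]
  · rcases eq_or_ne u 0 with rfl | hu
    · simp [h0]
    · simp [inv_mul_cancel₀ hu, mul_comm]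
  · intro x _ hxu
    rcases eq_or_ne x 0 with rfl | hx
    · rw [h0, zero_mul]
    have hne : x⁻¹ * u ≠ 1 := fun h => hxu ((inv_mul_eq_one₀ hx).mp h)
    rw [sum_range_apply_pow_succ_eq_zero hω hne, mul_zero]
  · exact fun h => absurd (Finset.mem_univ u) h

theorem sum_apply_pow_eq_zero (hω : Function.Injective ω) {a : ℕ}
    (ha : ¬ Fintype.card k - 1 ∣ a) : ∑ x, ω x ^ a = 0 := by
  have ha0 : a ≠ 0 := by
    rintro rfl
    exact ha (dvd_zero _)
  have hne : ω ^ a ≠ 1 := fun h =>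
    ha (orderOf_eq_card_sub_one_of_injective hω ▸ orderOf_dvd_of_pow_eq_one h)
  simpa only [MulChar.pow_apply' ω ha0] using MulChar.sum_eq_zero_of_ne_one hne

end GaussSum

section TraceCharacter

variable {p : ℕ} [Fact p.Prime] {A : Type*} [CommRing A] {ζ : A}
variable {k : Type*} [Field k] [Algebra (ZMod p) k]

/-- The additive character `x ↦ ζ ^ Tr x` of an extension `k` of `ZMod p`, where the exponent
`Tr x : ZMod p` makes sense because `ζ ^ p = 1`. -/
noncomputable def traceChar (k : Type*) [Field k] [Algebra (ZMod p) k] (hζ : ζ ^ p = 1) :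
    AddChar k A :=
  (AddChar.zmodChar p hζ).compAddMonoidHom (Algebra.trace (ZMod p) k).toAddMonoidHom

theorem traceChar_apply (hζ : ζ ^ p = 1) (x : k) :
    traceChar k hζ x = ζ ^ (Algebra.trace (ZMod p) k x).val := by
  simp [traceChar, AddChar.zmodChar_apply]

theorem sum_inv_mul_pow_eq_zero [Fintype k] {a : ℕ} (ha1 : 1 < a) (ha : a < Fintype.card k) :
    ∑ x : k, x⁻¹ * x ^ a = 0 := by
  rw [← FiniteField.sum_pow_lt_card_sub_one k (a - 1) (by lia)]
  refine Finset.sum_congr rfl fun x _ => ?_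
  rcases eq_or_ne x 0 with rfl | hx
  · rw [inv_zero, zero_mul, zero_pow (by lia)]
  · rw [pow_sub₀ x hx ha1.le, pow_one, mul_comm]

theorem sum_inv_mul_trace [Fintype k] :
    ∑ x : k, x⁻¹ * algebraMap (ZMod p) k (Algebra.trace (ZMod p) k x) = -1 := by
  classical
  have hcard : Fintype.card k = p ^ Module.finrank (ZMod p) k := by
    rw [Module.card_eq_pow_finrank (K := ZMod p), ZMod.card]
  have hlinear : ∑ x : k, x⁻¹ * x = -1 := by
    rw [← Finset.add_sum_erase _ _ (Finset.mem_univ (0 : k)),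
      Finset.sum_congr rfl fun x hx => inv_mul_cancel₀ (Finset.ne_of_mem_erase hx),
      Finset.sum_const, Finset.card_erase_of_mem (Finset.mem_univ _), Finset.card_univ,
      nsmul_eq_mul, Nat.cast_sub Fintype.card_pos, Nat.cast_card_eq_zero]
    simp
  simp_rw [FiniteField.algebraMap_trace_eq_sum_pow, Finset.mul_sum]
  rw [Finset.sum_comm, Finset.sum_eq_single_of_mem 0 (Finset.mem_range.mpr Module.finrank_pos)]
  · simpa using hlinear
  · intro i hi hi0
    have hp := (Fact.out : p.Prime).one_lt
    rw [Nat.card_zmod]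
    refine sum_inv_mul_pow_eq_zero (Nat.one_lt_pow hi0 hp) ?_
    rw [hcard]
    exact Nat.pow_lt_pow_right hp (Finset.mem_range.mp hi)

variable [Finite k]

theorem traceChar_pow_char (hζ : ζ ^ p = 1) (x : k) :
    traceChar k hζ (x ^ p) = traceChar k hζ x := by
  have := Fintype.ofFinite k
  have htrace := Algebra.trace_eq_of_algEquiv
    (FiniteField.frobeniusAlgEquivOfAlgebraic (ZMod p) k) x
  rw [traceChar_apply, traceChar_apply, ← htrace]
  simp

theorem traceChar_isPrimitive (hζ : IsPrimitiveRoot ζ p) :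
    (traceChar k hζ.pow_eq_one).IsPrimitive := by
  refine AddChar.IsPrimitive.of_ne_one (AddChar.ne_one_iff.mpr ?_)
  obtain ⟨x, hx⟩ := Algebra.trace_surjective (ZMod p) k 1
  have hp := (Fact.out : p.Prime).one_lt
  have : Fact (1 < p) := ⟨hp⟩
  refine ⟨x, ?_⟩
  rw [traceChar_apply, hx, ZMod.val_one, pow_one]
  exact hζ.ne_one hp

end TraceCharacter

section CyclotomicPrime

variable {p : ℕ} {A : Type*} [CommRing A] [IsDomain A] {ζ : A}

theorem associated_sub_one_pow_prime (hp : p.Prime) (hζ : IsPrimitiveRoot ζ p) :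
    Associated ((ζ - 1) ^ (p - 1)) (p : A) := by
  obtain ⟨n, rfl⟩ : ∃ n, p = n + 1 := ⟨p - 1, by have := hp.pos; lia⟩
  have hprod := hζ.prod_one_sub_pow_eq_order
  rw [Nat.cast_add_one, ← hprod, Nat.add_sub_cancel, ← Finset.card_range n, ← Finset.prod_const,
    Finset.card_range]
  refine Associated.prod _ _ _ fun i hi => ?_
  have hcop : (i + 1).Coprime (n + 1) :=
    (Nat.coprime_of_lt_prime i.add_one_ne_zero (by simpa using hi) hp).symm
  rw [← neg_sub (ζ ^ (i + 1))]
  exact (hζ.associated_sub_one_pow_sub_one_of_coprime hcop).neg_right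

theorem associated_sub_one_pow_prime_pow (hp : p.Prime) (hζ : IsPrimitiveRoot ζ p) (f : ℕ) :
    Associated ((ζ - 1) ^ (f * (p - 1))) ((p ^ f : ℕ) : A) := by
  rw [Nat.cast_pow, mul_comm, pow_mul]
  exact (associated_sub_one_pow_prime hp hζ).pow_pow

end CyclotomicPrime

section Teichmuller

variable {k : Type*} [Field k] {A : Type*} [CommRing A] [IsLocalRing A]
  [Algebra k (IsLocalRing.ResidueField A)]

/-- A Teichmüller character: a multiplicative character of `k` with values in a local ring `A` whose
residue field contains `k`, sending each `x` to a lift of `x`. -/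
def IsTeichmuller (ω : MulChar k A) : Prop :=
  ∀ x, IsLocalRing.residue A (ω x) = algebraMap k (IsLocalRing.ResidueField A) x

variable {ω : MulChar k A}

theorem IsTeichmuller.injective (hω : IsTeichmuller ω) : Function.Injective ω := fun x y h =>
  (algebraMap k (IsLocalRing.ResidueField A)).injective (by rw [← hω, ← hω, h])

theorem IsTeichmuller.residue_inv_apply (hω : IsTeichmuller ω) (x : k) :
    IsLocalRing.residue A (ω⁻¹ x) = algebraMap k (IsLocalRing.ResidueField A) x⁻¹ := by
  rw [MulChar.inv_apply', hω]

theorem IsTeichmuller.orderOf_inv [Fintype k] (hω : IsTeichmuller ω) :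
    orderOf ω⁻¹ = Fintype.card k - 1 := by
  rw [_root_.orderOf_inv, orderOf_eq_card_sub_one_of_injective hω.injective]

variable (k) in
theorem isUnit_card_sub_one [Fintype k] : IsUnit ((Fintype.card k - 1 : ℕ) : A) := by
  rw [← IsLocalRing.residue_ne_zero_iff_isUnit, map_natCast,
    ← map_natCast (algebraMap k (IsLocalRing.ResidueField A)), Nat.cast_sub Fintype.card_pos,
    Nat.cast_card_eq_zero]
  simp

variable {p : ℕ} [Fact p.Prime]

variable (k) in
theorem residue_eq_one_of_pow_char_eq_one [CharP k p] {ζ : A} (hζ : ζ ^ p = 1) :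
    IsLocalRing.residue A ζ = 1 := by
  have := charP_of_injective_algebraMap (algebraMap k (IsLocalRing.ResidueField A)).injective p
  refine sub_eq_zero.mp (eq_zero_of_pow_eq_zero (n := p) ?_)
  rw [sub_pow_char, ← map_pow, hζ, map_one, one_pow, sub_self]

variable [Algebra (ZMod p) k] {ζ : A}

section Stickelberger

variable [Fintype k] [IsDomain A]

theorem IsTeichmuller.associated_gaussSum_inv (hω : IsTeichmuller ω) (hζ : ζ ^ p = 1)
    (hk : 2 < Fintype.card k) : Associated (gaussSum ω⁻¹ (traceChar k hζ)) (ζ - 1) := by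
  have : CharP k p := charP_of_injective_algebraMap (algebraMap (ZMod p) k).injective p
  let t (x : k) : ℕ := (Algebra.trace (ZMod p) k x).val
  let cofactor : A := ∑ x, ω⁻¹ x * ∑ i ∈ Finset.range (t x), ζ ^ i
  have hne : ω⁻¹ ≠ 1 := fun h => by
    have := hω.orderOf_inv
    rw [h, orderOf_one] at this
    lia
  have hfactor : gaussSum ω⁻¹ (traceChar k hζ) = (ζ - 1) * cofactor := by
    rw [gaussSum, ← sub_zero (∑ x, _), ← MulChar.sum_eq_zero_of_ne_one hne,
      ← Finset.sum_sub_distrib, Finset.mul_sum]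
    refine Finset.sum_congr rfl fun x _ => ?_
    rw [mul_left_comm, mul_geom_sum, traceChar_apply]
    ring
  have hresidue : IsLocalRing.residue A cofactor = -1 := by
    rw [← map_one (algebraMap k (IsLocalRing.ResidueField A)), ← map_neg,
      ← sum_inv_mul_trace (p := p), map_sum, map_sum]
    refine Finset.sum_congr rfl fun x _ => ?_
    have htrace : algebraMap (ZMod p) k (Algebra.trace (ZMod p) k x) = t x := by
      rw [← map_natCast (algebraMap (ZMod p) k), ZMod.natCast_zmod_val]
    rw [map_mul, map_mul, hω.residue_inv_apply, htrace]
    simp [residue_eq_one_of_pow_char_eq_one k hζ]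
  rw [hfactor]
  refine associated_mul_unit_left _ _ ?_
  rw [← IsLocalRing.residue_ne_zero_iff_isUnit, hresidue]
  exact neg_ne_zero.mpr one_ne_zero

theorem IsTeichmuller.sub_one_pow_digitSum_dvd_gaussSum (hω : IsTeichmuller ω)
    (hζ : IsPrimitiveRoot ζ p) {m : ℕ} (hm : m < Fintype.card k - 1) :
    (ζ - 1) ^ digitSum p m ∣ gaussSum (ω⁻¹ ^ m) (traceChar k hζ.pow_eq_one) := by
  rcases Nat.eq_zero_or_pos m with rfl | hm0
  · simp
  have : CharP k p := charP_of_injective_algebraMap (algebraMap (ZMod p) k).injective p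
  obtain ⟨f, -, hf⟩ := FiniteField.card k p
  let ψ := traceChar k hζ.pow_eq_one
  let b := Fintype.card k - 1 - m
  have hne : ω⁻¹ ^ m ≠ 1 := pow_ne_one_of_lt_orderOf hm0.ne' (hω.orderOf_inv ▸ hm)
  have hinv : (ω⁻¹ ^ m)⁻¹ = ω⁻¹ ^ b := by
    apply inv_eq_of_mul_eq_one_right
    rw [← pow_add, Nat.add_sub_cancel' hm.le, ← hω.orderOf_inv, pow_orderOf_eq_one]
  have hcard := card_dvd_gaussSum_mul_gaussSum_inv hne (traceChar_isPrimitive (k := k) hζ)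
  have hb : gaussSum (ω⁻¹ ^ b) ψ ∣ (ζ - 1) ^ digitSum p b :=
    (gaussSum_pow_dvd_gaussSum_pow_digitSum p ω⁻¹ (traceChar_pow_char hζ.pow_eq_one)
      (by lia) (by rw [hω.orderOf_inv]; lia)).trans
      (hω.associated_gaussSum_inv hζ.pow_eq_one (by lia)).pow_pow.dvd
  have hdigits : digitSum p b + digitSum p m = f * (p - 1) := by
    rw [← digitSum_complement_add_digitSum (Fact.out : p.Prime).one_lt f (b := m) (by lia), ← hf]
  have hζ0 : ζ - 1 ≠ 0 := sub_ne_zero.mpr (hζ.ne_one (Fact.out : p.Prime).one_lt)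
  rw [← mul_dvd_mul_iff_right (pow_ne_zero (digitSum p b) hζ0), ← pow_add, add_comm, hdigits]
  calc
    (ζ - 1) ^ (f * (p - 1)) ∣ (Fintype.card k : A) :=
      hf ▸ (associated_sub_one_pow_prime_pow Fact.out hζ f).dvd
    _ ∣ gaussSum (ω⁻¹ ^ m) ψ * gaussSum (ω⁻¹ ^ b) ψ := hinv ▸ hcard
    _ ∣ gaussSum (ω⁻¹ ^ m) ψ * (ζ - 1) ^ digitSum p b := mul_dvd_mul_left _ hb

theorem IsTeichmuller.sub_one_pow_digitSum_dvd_sum (hω : IsTeichmuller ω)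
    (hζ : IsPrimitiveRoot ζ p) {m : ℕ} (hm0 : 0 < m) (hm : m < Fintype.card k) :
    (ζ - 1) ^ digitSum p m ∣ ∑ x, (ω⁻¹ ^ m) x * (traceChar k hζ.pow_eq_one x - 1) := by
  have hsum : ∑ x, (ω⁻¹ ^ m) x * (traceChar k hζ.pow_eq_one x - 1) =
      gaussSum (ω⁻¹ ^ m) (traceChar k hζ.pow_eq_one) - ∑ x, (ω⁻¹ ^ m) x := by
    simp_rw [mul_sub, mul_one, Finset.sum_sub_distrib, gaussSum]
  rcases (show m ≤ Fintype.card k - 1 by lia).lt_or_eq with hlt | heq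
  · have hne : ω⁻¹ ^ m ≠ 1 := pow_ne_one_of_lt_orderOf hm0.ne' (hω.orderOf_inv ▸ hlt)
    rw [hsum, MulChar.sum_eq_zero_of_ne_one hne, sub_zero]
    exact hω.sub_one_pow_digitSum_dvd_gaussSum hζ hlt
  · have : CharP k p := charP_of_injective_algebraMap (algebraMap (ZMod p) k).injective p
    classical
    obtain ⟨f, -, hf⟩ := FiniteField.card k p
    have hψ : traceChar k hζ.pow_eq_one ≠ 1 :=
      AddChar.mulShift_one (traceChar k hζ.pow_eq_one) ▸ traceChar_isPrimitive hζ one_ne_zero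
    have hone : ω⁻¹ ^ m = 1 := by rw [heq, ← hω.orderOf_inv, pow_orderOf_eq_one]
    have hdigits : digitSum p m = f * (p - 1) := by
      rw [heq, hf, ← digitSum_complement_add_digitSum (Fact.out : p.Prime).one_lt f
        (b := 0) (pow_pos (Fact.out : p.Prime).pos f), digitSum_zero, Nat.sub_zero, add_zero]
    have hvalue : ∑ x, (ω⁻¹ ^ m) x * (traceChar k hζ.pow_eq_one x - 1) = -Fintype.card k := by
      rw [hsum, hone, gaussSum_one_left hψ, MulChar.sum_one_eq_card_units, Fintype.card_units,
        Nat.cast_sub Fintype.card_pos]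
      ring
    rw [hvalue, hdigits, hf]
    exact (associated_sub_one_pow_prime_pow Fact.out hζ f).dvd.neg_right

theorem IsTeichmuller.exists_traceChar_eq_sum (hω : IsTeichmuller ω) (hζ : IsPrimitiveRoot ζ p) :
    ∃ c : ℕ → A,
      (∀ u, traceChar k hζ.pow_eq_one u = ∑ m ∈ Finset.range (Fintype.card k), c m * ω u ^ m) ∧
      ∀ m < Fintype.card k, (ζ - 1) ^ digitSum p m ∣ c m := by
  obtain ⟨v, hv⟩ := (isUnit_card_sub_one k (A := A)).exists_left_inv
  let H (m : ℕ) : A := ∑ x, (ω⁻¹ ^ m) x * (traceChar k hζ.pow_eq_one x - 1)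
  refine ⟨fun m => if m = 0 then 1 else v * H m, fun u => ?_, fun m hm => ?_⟩
  · have hfourier := sum_range_sum_inv_pow_mul_mul_pow hω.injective
      (fun x => traceChar k hζ.pow_eq_one x - 1) (by simp) u
    rw [← Nat.sub_one_add_one (Fintype.card_ne_zero (α := k)), Finset.sum_range_succ']
    simp only [Nat.add_eq_zero_iff, one_ne_zero, and_false, if_false, if_true, pow_zero, mul_one,
      mul_assoc, ← Finset.mul_sum]
    rw [hfourier, ← mul_assoc, hv]
    ring
  · rcases eq_or_ne m 0 with rfl | hm0
    · simp
    · simp only [if_neg hm0]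
      exact (hω.sub_one_pow_digitSum_dvd_sum hζ (Nat.pos_of_ne_zero hm0) hm).mul_left v

end Stickelberger

end Teichmuller

section TeichmullerExistence

variable {p : ℕ} [Fact p.Prime]

theorem charZero_wittVector (k : Type*) [Field k] [CharP k p] : CharZero (WittVector p k) := by
  obtain ⟨c, _⟩ := CharP.exists (WittVector p k)
  rcases CharP.char_is_prime_or_zero (WittVector p k) c with hc | rfl
  · have hck : (c : k) = 0 := by
      rw [← map_natCast (WittVector.constantCoeff (p := p) (R := k)), CharP.cast_eq_zero, map_zero]
    obtain rfl : p = c :=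
      (Nat.prime_dvd_prime_iff_eq Fact.out hc).mp ((CharP.cast_eq_zero_iff k p c).mp hck)
    exact absurd (CharP.cast_eq_zero (WittVector p k) p) (WittVector.p_nonzero p k)
  · exact CharP.charP_to_charZero _

theorem exists_isTeichmuller_of_isLocalHom {k A : Type*} [Field k] [CommRing A] [IsLocalRing A]
    (f : WittVector p k →+* A) [IsLocalHom f] :
    ∃ (_ : Algebra k (IsLocalRing.ResidueField A)) (ω : MulChar k A), IsTeichmuller ω := by
  have hker (w : WittVector p k) (hw : WittVector.constantCoeff w = 0) :
      IsLocalRing.residue A (f w) = 0 := by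
    rw [IsLocalRing.residue_eq_zero_iff, IsLocalRing.mem_maximalIdeal, mem_nonunits_iff,
      isUnit_map_iff f]
    exact fun hunit => not_isUnit_zero (hw ▸ hunit.map WittVector.constantCoeff)
  let g : k →+* IsLocalRing.ResidueField A :=
    RingHom.liftOfSurjective WittVector.constantCoeff (WittVector.constantCoeff_surjective p)
      ⟨(IsLocalRing.residue A).comp f, hker⟩
  have hg (w : WittVector p k) : g (WittVector.constantCoeff w) = IsLocalRing.residue A (f w) :=
    RingHom.liftOfRightInverse_comp_apply WittVector.constantCoeff _ _
      ⟨(IsLocalRing.residue A).comp f, hker⟩ w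
  let ω : MulChar k A :=
    { toMonoidHom := (f : WittVector p k →* A).comp (WittVector.teichmuller p)
      map_nonunit' := fun x hx => by
        obtain rfl : x = 0 := not_ne_iff.mp (isUnit_iff_ne_zero.not.mp hx)
        simp }
  exact ⟨g.toAlgebra, ω, fun x => (hg (WittVector.teichmuller p x)).symm⟩

theorem mem_valuationSubring_of_pow_eq_one {L : Type*} [Field L] (A : ValuationSubring L) {z : L}
    {n : ℕ} (hn : n ≠ 0) (hz : z ^ n = 1) : z ∈ A := by
  rw [← A.valuation_le_one_iff]
  exact ((pow_eq_one_iff.mp (by rw [← map_pow, hz, map_one])).resolve_right hn).le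

theorem exists_isTeichmuller_isPrimitiveRoot.{u} (k : Type u) [Field k] [Finite k]
    [CharP k p] :
    ∃ (A : Type u) (_ : CommRing A) (_ : IsDomain A) (_ : IsLocalRing A) (_ : CharZero A)
      (_ : Algebra k (IsLocalRing.ResidueField A)) (ω : MulChar k A) (ζ : A),
      IsTeichmuller ω ∧ IsPrimitiveRoot ζ p := by
  have := charZero_wittVector (p := p) k
  let K := FractionRing (WittVector p k)
  let L := AlgebraicClosure K
  have : CharZero K :=
    charZero_of_injective_algebraMap (IsFractionRing.injective (WittVector p k) K)
  have : CharZero L := charZero_of_injective_algebraMap (algebraMap K L).injective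
  obtain ⟨A, hrange, hlocal⟩ := IsLocalRing.exists_factor_valuationRing
    ((algebraMap K L).comp (algebraMap (WittVector p k) K))
  obtain ⟨_, ω, hω⟩ := exists_isTeichmuller_of_isLocalHom (A := A)
    (RingHom.codRestrict _ A.toSubring hrange)
  obtain ⟨z, hz⟩ := HasEnoughRootsOfUnity.exists_primitiveRoot L p
  exact ⟨A, inferInstance, inferInstance, inferInstance, (algebraMap A L).charZero, _, ω,
    ⟨z, mem_valuationSubring_of_pow_eq_one A (NeZero.ne p) hz.pow_eq_one⟩, hω,
    .of_map_of_injective (f := A.subtype) hz Subtype.val_injective⟩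

end TeichmullerExistence

section Exponents

variable {V : Type*} {s : Finset (V →₀ ℕ)}

/-- The exponent vector of the product of the monomials `X ^ e` for `e ∈ s`, taken with
multiplicities `m e`. -/
noncomputable def exponentSum (m : s → ℕ) : V →₀ ℕ := ∑ e, m e • (e : V →₀ ℕ)

theorem exponentSum_apply (m : s → ℕ) (v : V) :
    exponentSum m v = ∑ e, m e * (e : V →₀ ℕ) v := by
  simp [exponentSum, Finsupp.finsetSum_apply]

theorem exponentSum_digitRotate_apply_eq_zero_iff {p : ℕ} (hp : 0 < p) {f i : ℕ} (m : s → ℕ)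
    (v : V) : exponentSum (fun e => digitRotate p f i (m e)) v = 0 ↔ exponentSum m v = 0 := by
  simp [exponentSum_apply, Finset.sum_eq_zero_iff, digitRotate_eq_zero_iff hp]

theorem dvd_exponentSum_digitRotate_apply {p : ℕ} (hp : 0 < p) {f : ℕ} (i : ℕ) {m : s → ℕ} {v : V}
    (hdvd : p ^ f - 1 ∣ exponentSum m v) :
    p ^ f - 1 ∣ exponentSum (fun e => digitRotate p f i (m e)) v := by
  have hshift : exponentSum (fun e => digitRotate p f i (m e)) v +
      (p ^ f - 1) * exponentSum (fun e => p ^ i * m e / p ^ f) v = p ^ i * exponentSum m v := by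
    simp_rw [exponentSum_apply, Finset.mul_sum, ← Finset.sum_add_distrib, ← mul_assoc, ← add_mul,
      digitRotate_add_sub_one_mul hp]
  exact (Nat.dvd_add_left (dvd_mul_right _ _)).mp (hshift ▸ hdvd.mul_left _)

variable [Fintype V]

/-- `B` bounds from below the weight `(∑ m) / Q + #{v | the exponent of v vanishes}` of every
multiplicity vector `m` on `s` whose exponent vector is divisible by `Q`. For `Q = q - 1` these are
the vectors that contribute to an exponential sum over the field with `q` elements. -/
def IsWeightBound (Q B : ℕ) (s : Finset (V →₀ ℕ)) : Prop :=
  ∀ m : s → ℕ, (∀ v, Q ∣ exponentSum m v) →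
    Q * B ≤ ∑ e, m e + Q * Finset.card {v | exponentSum m v = 0}

/-- Averaging the weight bound over the rotations of `m` turns `∑ m` into a digit sum. -/
theorem IsWeightBound.le_sum_digitSum {p f B : ℕ} (hp : 1 < p) (hf : f ≠ 0)
    (hB : IsWeightBound (p ^ f - 1) B s) {m : s → ℕ} (hm : ∀ e, m e < p ^ f)
    (hdvd : ∀ v, p ^ f - 1 ∣ exponentSum m v) :
    f * (p - 1) * B ≤
      ∑ e, digitSum p (m e) + f * (p - 1) * Finset.card {v | exponentSum m v = 0} := by
  have hrotate (i : ℕ) : (p ^ f - 1) * B ≤ ∑ e, digitRotate p f i (m e) +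
      (p ^ f - 1) * Finset.card {v | exponentSum m v = 0} := by
    have := hB (fun e => digitRotate p f i (m e)) fun v =>
      dvd_exponentSum_digitRotate_apply (by lia) i (hdvd v)
    simpa only [exponentSum_digitRotate_apply_eq_zero_iff (by lia : 0 < p)] using this
  have hQ : 0 < p ^ f - 1 := Nat.sub_pos_of_lt (Nat.one_lt_pow hf hp)
  have hsum := Nat.mul_le_mul_left (p - 1) (Finset.sum_le_sum fun i (_ : i ∈ Finset.range f) =>
    hrotate i)
  rw [Finset.sum_add_distrib, Finset.sum_comm, mul_add, Finset.mul_sum (Finset.univ : Finset s)]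
    at hsum
  rw [Finset.sum_congr rfl fun e _ => sub_one_mul_sum_digitRotate hp f (hm e),
    ← Finset.mul_sum Finset.univ, Finset.sum_const, Finset.sum_const, Finset.card_range,
    smul_eq_mul, smul_eq_mul] at hsum
  refine Nat.le_of_mul_le_mul_left ?_ hQ
  linarith

end Exponents

section ExponentialSum

theorem addChar_map_sum {G R J : Type*} [AddCommMonoid G] [CommMonoid R] (ψ : AddChar G R)
    (s : Finset J) (g : J → G) : ψ (∑ j ∈ s, g j) = ∏ j ∈ s, ψ (g j) :=
  map_prod ψ.toMonoidHom (fun j => Multiplicative.ofAdd (g j)) s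

variable {k A V : Type*} [Field k] [CommRing A] [Fintype V]

theorem addChar_eval_eq_sum [DecidableEq V] {N : ℕ} {c : ℕ → A} {ψ : AddChar k A}
    {ω : MulChar k A} (hc : ∀ u, ψ u = ∑ m ∈ Finset.range N, c m * ω u ^ m)
    (P : MvPolynomial V k) (z : V → k) :
    ψ (eval z P) = ∑ m ∈ Fintype.piFinset fun _ : P.support => Finset.range N,
      (∏ e, c (m e) * ω (P.coeff e) ^ m e) * ∏ v, ω (z v) ^ exponentSum m v := by
  rw [eval_eq', ← Finset.sum_coe_sort P.support, addChar_map_sum]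
  simp_rw [hc]
  rw [Finset.prod_univ_sum]
  refine Finset.sum_congr rfl fun m _ => ?_
  simp_rw [map_mul, mul_pow, ← mul_assoc, Finset.prod_mul_distrib, map_prod, map_pow,
    ← Finset.prod_pow, exponentSum_apply, ← Finset.prod_pow_eq_pow_sum, ← pow_mul]
  rw [Finset.prod_comm]
  simp_rw [mul_comm (m _)]

variable [Fintype k]

theorem sum_addChar_eval_eq_sum [DecidableEq V] {N : ℕ} {c : ℕ → A} {ψ : AddChar k A}
    {ω : MulChar k A} (hc : ∀ u, ψ u = ∑ m ∈ Finset.range N, c m * ω u ^ m) (P : MvPolynomial V k) :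
    ∑ z, ψ (eval z P) = ∑ m ∈ Fintype.piFinset fun _ : P.support => Finset.range N,
      (∏ e, c (m e) * ω (P.coeff e) ^ m e) * ∏ v, ∑ x, ω x ^ exponentSum m v := by
  simp_rw [addChar_eval_eq_sum hc]
  rw [Finset.sum_comm]
  simp_rw [← Finset.mul_sum, Finset.prod_univ_sum, Fintype.piFinset_univ]

theorem card_pow_dvd_prod_sum_pow (ω : MulChar k A) (a : V → ℕ) :
    (Fintype.card k : A) ^ Finset.card {v | a v = 0} ∣ ∏ v, ∑ x, ω x ^ a v := by
  rw [← Finset.prod_const]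
  refine Dvd.dvd.trans (dvd_of_eq (Finset.prod_congr rfl fun v hv => ?_))
    (Finset.prod_dvd_prod_of_subset _ _ _ (Finset.filter_subset _ _))
  simp [(Finset.mem_filter.mp hv).2]

variable [IsDomain A] [IsLocalRing A] [Algebra k (IsLocalRing.ResidueField A)]
  {p : ℕ} [Fact p.Prime] [Algebra (ZMod p) k]

theorem IsWeightBound.sub_one_pow_dvd_sum_traceChar [DecidableEq V] {ω : MulChar k A}
    (hω : IsTeichmuller ω) {ζ : A} (hζ : IsPrimitiveRoot ζ p) {f : ℕ}
    (hf : Fintype.card k = p ^ f) {P : MvPolynomial V k} {B : ℕ}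
    (hB : IsWeightBound (Fintype.card k - 1) B P.support) :
    (ζ - 1) ^ (f * (p - 1) * B) ∣ ∑ z, traceChar k hζ.pow_eq_one (eval z P) := by
  have hf0 : f ≠ 0 := by
    rintro rfl
    exact (Fintype.one_lt_card (α := k)).ne' hf
  obtain ⟨c, hexpand, hdvd⟩ := hω.exists_traceChar_eq_sum hζ
  rw [sum_addChar_eval_eq_sum hexpand]
  refine Finset.dvd_sum fun m hm => ?_
  replace hm (e) : m e < Fintype.card k := Finset.mem_range.mp (Fintype.mem_piFinset.mp hm e)
  by_cases hexp : ∀ v, Fintype.card k - 1 ∣ exponentSum m v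
  · refine (pow_dvd_pow _ (IsWeightBound.le_sum_digitSum (Fact.out : p.Prime).one_lt hf0
      (hf ▸ hB) (hf ▸ hm) (hf ▸ hexp))).trans ?_
    rw [pow_add, ← Finset.prod_pow_eq_pow_sum, pow_mul]
    refine mul_dvd_mul (Finset.prod_dvd_prod_of_dvd _ _ fun e _ => (hdvd _ (hm e)).mul_right _)
      (Dvd.dvd.trans ?_ (card_pow_dvd_prod_sum_pow ω _))
    exact pow_dvd_pow_of_dvd (hf ▸ (associated_sub_one_pow_prime_pow Fact.out hζ f).dvd) _
  · obtain ⟨v, hv⟩ := not_forall.mp hexp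
    rw [Finset.prod_eq_zero (Finset.mem_univ v) (sum_apply_pow_eq_zero hω.injective hv), mul_zero]
    exact dvd_zero _

end ExponentialSum

section CayleyPolynomial

variable {ι σ : Type*} [Fintype ι]

/-- The polynomial `∑ i, y i * F i` in the variables of the family `F` and one additional variable
`y i` for each member of it. Summing an additive character of it over the `y i` detects the common
zeros of `F`. -/
noncomputable def cayleyPolynomial {R : Type*} [CommSemiring R] (F : ι → MvPolynomial σ R) :
    MvPolynomial (ι ⊕ σ) R :=
  ∑ i, X (Sum.inl i) * rename Sum.inr (F i)

section Support

variable {R : Type*} [CommSemiring R] {F : ι → MvPolynomial σ R}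

theorem eval_cayleyPolynomial (z : ι ⊕ σ → R) :
    eval z (cayleyPolynomial F) = ∑ i, z (Sum.inl i) * eval (z ∘ Sum.inr) (F i) := by
  simp [cayleyPolynomial, eval_rename]

theorem exists_of_mem_support_cayleyPolynomial {e : ι ⊕ σ →₀ ℕ}
    (he : e ∈ (cayleyPolynomial F).support) :
    ∃ i, ∃ a ∈ (F i).support, e = Finsupp.single (Sum.inl i) 1 + a.mapDomain Sum.inr := by
  classical
  obtain ⟨i, -, hi⟩ := Finset.mem_biUnion.mp (support_sum he)
  rw [support_X_mul, support_rename_of_injective Sum.inr_injective] at hi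
  obtain ⟨_, hrename, rfl⟩ := Finset.mem_map.mp hi
  obtain ⟨a, ha, rfl⟩ := Finset.mem_image.mp hrename
  exact ⟨i, a, ha, rfl⟩

theorem sum_inl_of_mem_support_cayleyPolynomial {e : ι ⊕ σ →₀ ℕ}
    (he : e ∈ (cayleyPolynomial F).support) : ∑ i, e (Sum.inl i) = 1 := by
  classical
  obtain ⟨i, a, -, rfl⟩ := exists_of_mem_support_cayleyPolynomial he
  simp [Finsupp.mapDomain_of_notMem_range, Finsupp.single_apply]

theorem sum_inr_le_of_mem_support_cayleyPolynomial [Fintype σ] {d : ι → ℕ}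
    (hF : ∀ i, (F i).totalDegree ≤ d i) {e : ι ⊕ σ →₀ ℕ} (he : e ∈ (cayleyPolynomial F).support) :
    ∑ l, e (Sum.inr l) ≤ ∑ i, d i * e (Sum.inl i) := by
  classical
  obtain ⟨i, a, ha, rfl⟩ := exists_of_mem_support_cayleyPolynomial he
  have hdeg := (le_totalDegree ha).trans (hF i)
  rw [Finsupp.sum_fintype _ _ fun _ => rfl] at hdeg
  simpa [Finsupp.mapDomain_of_notMem_range, Finsupp.single_apply,
    Finsupp.mapDomain_apply Sum.inr_injective] using hdeg

end Support

variable [Fintype σ]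

theorem card_add_ceilDiv_le_sum_add_card_eq_zero {d b : ι → ℕ} {c : σ → ℕ} {M : ℕ} (hM : 0 < M)
    (hdM : ∀ i, d i ≤ M) (hc : ∑ l, c l ≤ ∑ i, d i * b i) :
    Fintype.card ι + (Fintype.card σ - ∑ i, d i) ⌈/⌉ M ≤
      ∑ i, b i + (Finset.card {i | b i = 0} + Finset.card {l | c l = 0}) := by
  let Z := Finset.card {l | c l = 0}
  have hexcess : ∑ i, b i + Finset.card {i | b i = 0} = Fintype.card ι + ∑ i, (b i - 1) := by
    rw [Finset.card_filter, ← Finset.card_univ, Finset.card_eq_sum_ones, ← Finset.sum_add_distrib,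
      ← Finset.sum_add_distrib]
    exact Finset.sum_congr rfl fun i _ => by split_ifs <;> lia
  have hceil : (Fintype.card σ - ∑ i, d i) ⌈/⌉ M ≤ ∑ i, (b i - 1) + Z := by
    have hσ : Fintype.card σ ≤ ∑ l, c l + Z := by
      rw [← Finset.card_univ, Finset.card_eq_sum_ones, show Z = _ from Finset.card_filter _ _,
        ← Finset.sum_add_distrib]
      exact Finset.sum_le_sum fun l _ => by split_ifs <;> lia
    have hdegree : ∑ i, d i * b i ≤ M * ∑ i, (b i - 1) + ∑ i, d i := by
      rw [Finset.mul_sum, ← Finset.sum_add_distrib]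
      refine Finset.sum_le_sum fun i _ => ?_
      calc
        d i * b i ≤ d i * (b i - 1 + 1) := Nat.mul_le_mul_left _ (by lia)
        _ ≤ M * (b i - 1) + d i := by
          rw [mul_add_one]
          gcongr
          exact hdM i
    rw [ceilDiv_le_iff_le_mul hM, mul_add]
    have := Nat.le_mul_of_pos_left Z hM
    lia
  lia

theorem isWeightBound_support_cayleyPolynomial {R : Type*} [CommSemiring R]
    {F : ι → MvPolynomial σ R} {d : ι → ℕ} (hF : ∀ i, (F i).totalDegree ≤ d i) {M : ℕ}
    (hM : 0 < M) (hdM : ∀ i, d i ≤ M) {Q : ℕ} (hQ : 0 < Q) :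
    IsWeightBound Q (Fintype.card ι + (Fintype.card σ - ∑ i, d i) ⌈/⌉ M)
      (cayleyPolynomial F).support := by
  intro m hdvd
  choose b hb using hdvd
  have hzero (v) : exponentSum m v = 0 ↔ b v = 0 := by simp [hb, hQ.ne']
  have hinl : ∑ e, m e = Q * ∑ i, b (Sum.inl i) := by
    simp_rw [Finset.mul_sum, ← hb, exponentSum_apply]
    rw [Finset.sum_comm]
    simp_rw [← Finset.mul_sum, sum_inl_of_mem_support_cayleyPolynomial (Subtype.prop _), mul_one]
  have hinr : ∑ l, b (Sum.inr l) ≤ ∑ i, d i * b (Sum.inl i) := by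
    refine Nat.le_of_mul_le_mul_left ?_ hQ
    simp_rw [Finset.mul_sum, mul_left_comm Q, ← hb, exponentSum_apply, Finset.mul_sum]
    rw [Finset.sum_comm, Finset.sum_comm (s := Finset.univ (α := ι))]
    refine Finset.sum_le_sum fun e _ => ?_
    simp_rw [mul_left_comm (d _), ← Finset.mul_sum]
    exact Nat.mul_le_mul_left _ (sum_inr_le_of_mem_support_cayleyPolynomial hF e.2)
  have hcard : Finset.card {v | b v = 0} =
      Finset.card {i | b (Sum.inl i) = 0} + Finset.card {l | b (Sum.inr l) = 0} := by
    simp_rw [Finset.card_filter, Fintype.sum_sum_type]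
  simp_rw [hzero, hinl, hcard, ← mul_add]
  exact Nat.mul_le_mul_left Q (card_add_ceilDiv_le_sum_add_card_eq_zero hM hdM hinr)

theorem sum_addChar_eval_cayleyPolynomial {k A : Type*} [Field k] [Fintype k] [CommRing A]
    [IsDomain A] [DecidableEq ι] [DecidableEq σ] {ψ : AddChar k A} (hψ : ψ.IsPrimitive)
    (F : ι → MvPolynomial σ k) :
    ∑ z, ψ (eval z (cayleyPolynomial F)) =
      (Fintype.card k : A) ^ Fintype.card ι * Nat.card {x : σ → k // ∀ i, eval x (F i) = 0} := by
  classical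
  have hinner (x : σ → k) : ∑ y : ι → k, ψ (∑ i, y i * eval x (F i)) =
      if ∀ i, eval x (F i) = 0 then (Fintype.card k : A) ^ Fintype.card ι else 0 := by
    simp_rw [addChar_map_sum]
    rw [← Fintype.piFinset_univ, ← Finset.prod_univ_sum (fun _ => Finset.univ)
      (fun i y => ψ (y * eval x (F i)))]
    simp_rw [AddChar.sum_mulShift _ hψ, Nat.cast_ite, Nat.cast_zero, Finset.prod_ite_zero,
      Finset.mem_univ, true_imp_iff, Finset.prod_const, Finset.card_univ]
  simp_rw [eval_cayleyPolynomial]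
  rw [← (Equiv.sumArrowEquivProdArrow ι σ k).symm.sum_comp, Fintype.sum_prod_type_right]
  refine (Finset.sum_congr rfl fun x _ => hinner x).trans ?_
  rw [← Finset.sum_filter, Finset.sum_const, nsmul_eq_mul, mul_comm, Nat.card_eq_fintype_card,
    Fintype.card_subtype]

end CayleyPolynomial

section AffineAxKatz

theorem prime_pow_dvd_of_natCast_dvd {A : Type*} [CommRing A] [IsDomain A] [CharZero A] {p : ℕ}
    (hp : p.Prime) (hunit : ¬ IsUnit (p : A)) {s N : ℕ} (hdvd : ((p ^ s : ℕ) : A) ∣ N) :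
    p ^ s ∣ N := by
  rcases eq_or_ne N 0 with rfl | hN
  · exact dvd_zero _
  obtain ⟨e, u, hu, rfl⟩ := Nat.exists_eq_pow_mul_and_not_dvd hN p hp.ne_one
  have hcop : IsCoprime ((p : A) ^ s) u := by
    exact_mod_cast (Nat.isCoprime_iff_coprime.mpr
      (((Nat.Prime.coprime_iff_not_dvd hp).mpr hu).pow_left s)).intCast (R := A)
  push_cast at hdvd
  have hpow : (p : A) ^ s ∣ (p : A) ^ e := hcop.dvd_of_dvd_mul_right hdvd
  rw [pow_dvd_pow_iff (Nat.cast_ne_zero.mpr hp.ne_zero) hunit] at hpow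
  exact (pow_dvd_pow p hpow).mul_right u

theorem not_isUnit_natCast_char (k : Type*) {A : Type*} [Field k] [CommRing A] [IsLocalRing A]
    [Algebra k (IsLocalRing.ResidueField A)] (p : ℕ) [CharP k p] : ¬ IsUnit (p : A) := by
  rw [← IsLocalRing.residue_ne_zero_iff_isUnit, not_not, map_natCast,
    ← map_natCast (algebraMap k (IsLocalRing.ResidueField A)), CharP.cast_eq_zero, map_zero]

theorem card_pow_ceilDiv_dvd_card_zeros {k ι σ : Type*} [Field k] [Fintype k] [Fintype ι]
    [Fintype σ] {F : ι → MvPolynomial σ k} {d : ι → ℕ} (hF : ∀ i, (F i).totalDegree ≤ d i)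
    {M : ℕ} (hM : 0 < M) (hdM : ∀ i, d i ≤ M) :
    Fintype.card k ^ ((Fintype.card σ - ∑ i, d i) ⌈/⌉ M) ∣
      Nat.card {x : σ → k // ∀ i, eval x (F i) = 0} := by
  classical
  obtain ⟨p, _⟩ := CharP.exists k
  obtain ⟨f, hp, hf⟩ := FiniteField.card k p
  have : Fact p.Prime := ⟨hp⟩
  let _ : Algebra (ZMod p) k := ZMod.algebra k p
  obtain ⟨A, _, _, _, _, _, ω, ζ, hω, hζ⟩ := exists_isTeichmuller_isPrimitiveRoot (p := p) k
  have hbound := isWeightBound_support_cayleyPolynomial hF hM hdM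
    (Nat.sub_pos_of_lt (Fintype.one_lt_card (α := k)))
  have hdvd := hbound.sub_one_pow_dvd_sum_traceChar hω hζ hf
  rw [sum_addChar_eval_cayleyPolynomial (traceChar_isPrimitive hζ), pow_mul] at hdvd
  replace hdvd := (associated_sub_one_pow_prime_pow hp hζ f).symm.pow_pow.dvd.trans hdvd
  rw [← Nat.cast_pow, ← pow_mul, ← Nat.cast_pow, ← Nat.cast_mul] at hdvd
  have := prime_pow_dvd_of_natCast_dvd hp (not_isUnit_natCast_char k p) hdvd
  rw [pow_mul, ← hf, pow_add] at this
  exact Nat.dvd_of_mul_dvd_mul_left (pow_pos Fintype.card_pos _) this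

end AffineAxKatz

section ProjectiveAxKatz

theorem eval_smul_of_isHomogeneous {R σ : Type*} [CommSemiring R] {F : MvPolynomial σ R} {d : ℕ}
    (hF : F.IsHomogeneous d) (c : R) (x : σ → R) : eval (c • x) F = c ^ d * eval x F := by
  rw [eval_eq, eval_eq, Finset.mul_sum]
  refine Finset.sum_congr rfl fun e he => ?_
  have hdeg : ∑ i ∈ e.support, e i = d := by
    rw [← hF (mem_support_iff.mp he), Finsupp.weight_apply]
    simp [Finsupp.sum]
  simp_rw [Pi.smul_apply, smul_eq_mul, mul_pow, Finset.prod_mul_distrib,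
    Finset.prod_pow_eq_pow_sum, hdeg]
  ring

theorem card_cone_eq_card_projectivization_mul_add_one {k V : Type*} [DivisionRing k]
    [AddCommGroup V] [Module k V] [Finite V] {C : V → Prop} (hzero : C 0)
    (hsmul : ∀ (u : kˣ) v, C v → C (u • v)) :
    Nat.card {v // C v} = Nat.card {x : Projectivization k V // C x.rep} * Nat.card kˣ + 1 := by
  have hrep (v : {v : V // v ≠ 0}) : C v ↔ C (Projectivization.mk k v.1 v.2).rep := by
    obtain ⟨u, hu⟩ := Projectivization.exists_smul_eq_mk_rep k v.1 v.2
    refine hu ▸ ⟨hsmul u v, fun h => ?_⟩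
    simpa only [inv_smul_smul] using hsmul u⁻¹ _ h
  let e : {v // v ≠ 0 ∧ C v} ≃ {x : Projectivization k V // C x.rep} × kˣ :=
    (Equiv.subtypeSubtypeEquivSubtypeInter (· ≠ 0) C).symm.trans
      (((Projectivization.nonZeroEquivProjectivizationProdUnits k V).subtypeEquiv hrep).trans
        Equiv.prodSubtypeFstEquivSubtypeProd)
  have hnonzero : {v | C v} \ {0} = {v | v ≠ 0 ∧ C v} := Set.ext fun v => and_comm
  rw [← Nat.card_prod, ← Nat.card_congr e]
  calc
    Nat.card {v // C v} = ({v | C v} \ {0}).ncard + 1 :=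
      (Set.ncard_sdiff_singleton_add_one (s := {v | C v}) hzero).symm
    _ = Nat.card {v // v ≠ 0 ∧ C v} + 1 := by rw [hnonzero]; rfl

variable {k ι σ : Type*} [Field k] [Fintype k] {F : ι → MvPolynomial σ k} {d : ι → ℕ}

theorem card_zeros_eq_card_projective_zeros_mul_add_one [Finite σ] (hd : ∀ i, d i ≠ 0)
    (hF : ∀ i, (F i).IsHomogeneous (d i)) :
    Nat.card {x : σ → k // ∀ i, eval x (F i) = 0} =
      Nat.card {x : Projectivization k (σ → k) // ∀ i, eval x.rep (F i) = 0} *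
        (Fintype.card k - 1) + 1 := by
  rw [← Nat.card_eq_fintype_card, ← Nat.card_units]
  refine card_cone_eq_card_projectivization_mul_add_one (C := fun x => ∀ i, eval x (F i) = 0)
    (fun i => ?_) fun u x hx i => ?_
  · simpa [hd i] using eval_smul_of_isHomogeneous (hF i) 0 0
  · rw [Units.smul_def, eval_smul_of_isHomogeneous (hF i), hx i, mul_zero]

theorem projective_ax_katz_general [Fintype ι] [Fintype σ] (hd : ∀ i, d i ≠ 0)
    (hF : ∀ i, (F i).IsHomogeneous (d i)) {M : ℕ} (hM : 0 < M) (hdM : ∀ i, d i ≤ M) {r : ℕ}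
    (hr : r ≤ (Fintype.card σ - ∑ i, d i) ⌈/⌉ M) :
    Nat.card {x : Projectivization k (σ → k) // ∀ i, eval x.rep (F i) = 0} ≡
      ∑ i ∈ Finset.range r, Fintype.card k ^ i [MOD Fintype.card k ^ r] := by
  let q := Fintype.card k
  have hq : 1 ≤ q := Fintype.card_pos
  have hgeom : (∑ i ∈ Finset.range r, q ^ i) * (q - 1) + 1 = q ^ r := by
    rw [geom_sum_mul_of_one_le hq, Nat.sub_add_cancel (Nat.one_le_pow r q hq)]
  have hdvd : q ^ r ∣ Nat.card {x : σ → k // ∀ i, eval x (F i) = 0} := (pow_dvd_pow q hr).trans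
    (card_pow_ceilDiv_dvd_card_zeros (fun i => (hF i).totalDegree_le) hM hdM)
  have hcop : (q ^ r).Coprime (q - 1) :=
    Nat.Coprime.pow_left r ((Nat.coprime_self_sub_right hq).mpr (Nat.coprime_one_right q))
  refine Nat.ModEq.cancel_right_of_coprime hcop (Nat.ModEq.add_right_cancel' 1 ?_)
  rw [← card_zeros_eq_card_projective_zeros_mul_add_one hd hF, hgeom]
  exact (Nat.modEq_zero_iff_dvd.mpr hdvd).trans (Nat.modEq_zero_iff_dvd.mpr dvd_rfl).symm

end ProjectiveAxKatz

/-- Projective Ax–Katz congruence: for homogeneous polynomials F_1,...,F_t of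
degrees d_1,...,d_t in n+1 variables over F_q with d = ∑ d_i ≤ n and
r = ⌈(n - d)/max_i d_i⌉ ≥ 1, the number of points of the projective zero set
in P^n(F_q) is congruent to 1 + q + ... + q^(r-1) modulo q^r. -/
theorem projective_ax_katz (k : Type*) [Field k] [Fintype k]
    (q n t : ℕ) (hq : Fintype.card k = q) (ht : 1 ≤ t) (hn : 1 ≤ n)
    (d : Fin t → ℕ) (hd : ∀ i, 0 < d i)
    (hsum : ∑ i, d i ≤ n)
    (F : Fin t → MvPolynomial (Fin (n + 1)) k)
    (hF : ∀ i, (F i).IsHomogeneous (d i))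
    (M : ℕ) (hM : ∀ (h : (Finset.univ : Finset (Fin t)).Nonempty),
      M = Finset.univ.sup' h d)
    (r : ℕ) (hr : r = (n - ∑ i, d i + M - 1) / M) (hr1 : 1 ≤ r) :
    Nat.card {x : Projectivization k (Fin (n + 1) → k) //
        ∀ i, MvPolynomial.eval x.rep (F i) = 0} ≡
      ∑ i ∈ Finset.range r, q ^ i [MOD q ^ r] := by
  subst hq hr
  have hdM (i : Fin t) : d i ≤ M := hM ⟨i, Finset.mem_univ i⟩ ▸ Finset.le_sup' d (Finset.mem_univ i)
  have hM0 : 0 < M := (hd ⟨0, ht⟩).trans_le (hdM _)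
  refine projective_ax_katz_general (fun i => (hd i).ne') hF hM0 hdM ?_
  rw [Fintype.card_fin]
  exact (gc_mul_ceilDiv hM0).monotone_l (Nat.sub_le_sub_right n.le_succ _)
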